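/- Let $d \geq 1$, $1 \leq p < \infty$, $s \in \mathbb{R}$ and $n \in \mathbb{N}$. Then $2^{ns} \| g_n \, \partial_{x_1} f_n \|_{L^p(\mathbb{R}^d)} \; \geq \; \tfrac{17}{12} \big\| \phi^2(\cdot) \cos(\tfrac{17}{12} 2^n \cdot) \big\|_{L^p(\mathbb{R})} \, \| \phi \|_{L^{2p}(\mathbb{R})}^{2(d-1)} \; - \; 2^{-n} \, \| \phi \, \phi' \|_{L^p(\mathbb{R})} \, \| \phi \|_{L^{2p}(\mathbb{R})}^{2(d-1)}.$ -/

import Mathlib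

open MeasureTheory
open scoped RealInnerProductSpace ENNReal

/-- The Fourier transform on `ℝ` with the convention `f̂(ξ) = ∫ f(x) e^{-i x ξ} dx`. -/
noncomputable def fourierTransform1 (f : ℝ → ℝ) (ξ : ℝ) : ℂ :=
  ∫ x : ℝ, (f x : ℂ) * Complex.exp (-Complex.I * (x : ℂ) * (ξ : ℂ))

/-- The Fourier transform on `ℝ^d` with the convention `f̂(ξ) = ∫ f(x) e^{-i x·ξ} dx`. -/
noncomputable def fourierTransformD {d : ℕ} (f : EuclideanSpace ℝ (Fin d) → ℝ)
    (ξ : EuclideanSpace ℝ (Fin d)) : ℂ :=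
  ∫ x : EuclideanSpace ℝ (Fin d),
    (f x : ℂ) * Complex.exp (-Complex.I * ((⟪x, ξ⟫ : ℝ) : ℂ))

/-- The profile `f_n(x) = 2^{-ns} φ(x₁) sin((17/12) 2^n x₁) φ(x₂) ⋯ φ(x_d)`. -/
noncomputable def fprof (d : ℕ) (hd : 0 < d) (φ : ℝ → ℝ) (s : ℝ) (n : ℕ)
    (x : EuclideanSpace ℝ (Fin d)) : ℝ :=
  (2 : ℝ) ^ (-(n : ℝ) * s) * φ (x ⟨0, hd⟩) * Real.sin (17 / 12 * 2 ^ n * x ⟨0, hd⟩) *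
    ∏ i ∈ Finset.univ.filter (fun i : Fin d => i ≠ ⟨0, hd⟩), φ (x i)

/-- The profile `g_n(x) = 2^{-n} φ(x₁) φ(x₂) ⋯ φ(x_d)`. -/
noncomputable def gprof (d : ℕ) (φ : ℝ → ℝ) (n : ℕ)
    (x : EuclideanSpace ℝ (Fin d)) : ℝ :=
  (2 : ℝ) ^ (-(n : ℝ)) * ∏ i : Fin d, φ (x i)

/-- The partial derivative in the first coordinate. -/
noncomputable def pderivOne (d : ℕ) (hd : 0 < d) (f : EuclideanSpace ℝ (Fin d) → ℝ)
    (x : EuclideanSpace ℝ (Fin d)) : ℝ :=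
  fderiv ℝ f x (EuclideanSpace.single ⟨0, hd⟩ 1)

/-!
`fₙ` and `gₙ` are elementary tensors, and so are `∂₁fₙ`, where only the first factor is
differentiated, and the product `gₙ ∂₁fₙ`. By Fubini the `L^p` norm of an elementary tensor is the
product of the norms of its factors, so everything happens in the first coordinate. With
`ω = 17/12 * 2 ^ n`, the Leibniz rule there gives `φ (φ sin(ω ·))' = ω φ² cos(ω ·) + φ φ' sin(ω ·)`.
The triangle inequality and `|sin| ≤ 1` bound the norm of this below by
`ω ‖φ² cos(ω ·)‖ - ‖φ φ'‖`, and the factor `2 ^ (-n)` of `gₙ` compensates the frequency `ω`.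
-/

section LpNorm

variable {X : Type*} {mX : MeasurableSpace X} {μ : Measure X}

lemma lpNorm_comp_measurePreserving {Y E : Type*} {mY : MeasurableSpace Y} [NormedAddCommGroup E]
    {ν : Measure Y} {g : X → Y} {f : Y → E} (hf : AEStronglyMeasurable f ν)
    (hg : MeasurePreserving g μ ν) (p : ℝ≥0∞) :
    lpNorm (f ∘ g) p μ = lpNorm f p ν := by
  rw [← toReal_eLpNorm (hf.comp_measurePreserving hg), ← toReal_eLpNorm hf,
    eLpNorm_comp_measurePreserving hf hg]

lemma lpNorm_mono_norm {E F : Type*} [NormedAddCommGroup E] [NormedAddCommGroup F] {f : X → E}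
    {g : X → F} {p : ℝ≥0∞} (hg : MemLp g p μ) (hfg : ∀ x, ‖f x‖ ≤ ‖g x‖) :
    lpNorm f p μ ≤ lpNorm g p μ :=
  (lpNorm_mono_real hg.norm hfg).trans_eq (lpNorm_norm hg.aestronglyMeasurable p)

lemma lpNorm_pow {𝕜 : Type*} [NormedField 𝕜] {f : X → 𝕜} (hf : AEStronglyMeasurable f μ)
    (p : ℝ≥0∞) {k : ℕ} (hk : k ≠ 0) :
    lpNorm (fun x => f x ^ k) p μ = lpNorm f (k * p) μ ^ k := by
  have hpow := eLpNorm_norm_rpow (μ := μ) (p := p) f (q := k) (by positivity)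
  simp only [ENNReal.ofReal_natCast, mul_comm p, ENNReal.rpow_natCast, Real.rpow_natCast,
    ← norm_pow] at hpow
  rw [← toReal_eLpNorm (hf.fun_pow k), ← toReal_eLpNorm hf, ← ENNReal.toReal_pow, ← hpow,
    eLpNorm_norm]

end LpNorm

section PiProd

variable {ι 𝕜 : Type*} [Fintype ι] [NormedField 𝕜] {X : ι → Type*} {mX : ∀ i, MeasurableSpace (X i)}
  {μ : ∀ i, Measure (X i)} [∀ i, SigmaFinite (μ i)] {f : ∀ i, X i → 𝕜}

lemma aestronglyMeasurable_pi_prod (hf : ∀ i, AEStronglyMeasurable (f i) (μ i)) :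
    AEStronglyMeasurable (fun x : ∀ i, X i => ∏ i, f i (x i)) (Measure.pi μ) :=
  Finset.aestronglyMeasurable_fun_prod _ fun i _ =>
    (hf i).comp_quasiMeasurePreserving (Measure.quasiMeasurePreserving_eval μ i)

lemma lpNorm_pi_prod (hf : ∀ i, AEStronglyMeasurable (f i) (μ i)) {p : ℝ≥0∞} (hp : p ≠ 0)
    (hp' : p ≠ ⊤) :
    lpNorm (fun x : ∀ i, X i => ∏ i, f i (x i)) p (Measure.pi μ) = ∏ i, lpNorm (f i) p (μ i) := by
  simp_rw [lpNorm_eq_integral_norm_rpow_toReal hp hp' (aestronglyMeasurable_pi_prod hf), norm_prod,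
    ← Real.finsetProd_rpow _ _ (fun _ _ => norm_nonneg _),
    integral_fintype_prod_eq_prod (fun i t => ‖f i t‖ ^ p.toReal),
    fun i => lpNorm_eq_integral_norm_rpow_toReal hp hp' (hf i)]
  exact (Real.finsetProd_rpow _ _ (fun _ _ => integral_nonneg fun _ => by positivity) _).symm

end PiProd

lemma aestronglyMeasurable_update {ι Y : Type*} [DecidableEq ι] [TopologicalSpace Y]
    {X : ι → Type*} [∀ i, MeasurableSpace (X i)] {μ : ∀ i, Measure (X i)} {f : ∀ i, X i → Y}
    {i : ι} {u : X i → Y} (hu : AEStronglyMeasurable u (μ i))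
    (hf : ∀ j ≠ i, AEStronglyMeasurable (f j) (μ j)) (j : ι) :
    AEStronglyMeasurable (Function.update f i u j) (μ j) :=
  (Function.forall_update_iff f fun j w => AEStronglyMeasurable w (μ j)).2 ⟨hu, hf⟩ j

section TensorAt

variable {ι : Type*} [Fintype ι] [DecidableEq ι]

/-- The elementary tensor `v ⊗ ⋯ ⊗ u ⊗ ⋯ ⊗ v` on `ℝ^ι` with factor `u` in the coordinate `i` and
`v` in all others. The profiles `f_n`, `g_n` and the product `g_n ∂₁f_n` are all of this form. -/
noncomputable def tensorAt (i : ι) (u v : ℝ → ℝ) (x : EuclideanSpace ℝ ι) : ℝ :=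
  u (x i) * ∏ j with j ≠ i, v (x j)

lemma tensorAt_const_mul_left (i : ι) (c : ℝ) (u v : ℝ → ℝ) (x : EuclideanSpace ℝ ι) :
    tensorAt i (fun t => c * u t) v x = c * tensorAt i u v x :=
  mul_assoc _ _ _

lemma tensorAt_mul_tensorAt (i : ι) (u₁ v₁ u₂ v₂ : ℝ → ℝ) (x : EuclideanSpace ℝ ι) :
    tensorAt i u₁ v₁ x * tensorAt i u₂ v₂ x =
      tensorAt i (fun t => u₁ t * u₂ t) (fun t => v₁ t * v₂ t) x := by
  simp only [tensorAt, Finset.prod_mul_distrib]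
  ring

lemma tensorAt_eq_prod_update (i : ι) (u v : ℝ → ℝ) (x : EuclideanSpace ℝ ι) :
    tensorAt i u v x = ∏ j, Function.update (fun _ => v) i u j (x j) := by
  rw [← Finset.mul_prod_erase _ _ (Finset.mem_univ i), Function.update_self, tensorAt,
    Finset.filter_ne']
  congr 1
  exact Finset.prod_congr rfl fun j hj => by rw [Function.update_of_ne (Finset.ne_of_mem_erase hj)]

lemma tensorAt_self (i : ι) (v : ℝ → ℝ) (x : EuclideanSpace ℝ ι) :
    tensorAt i v v x = ∏ j, v (x j) := by
  rw [tensorAt_eq_prod_update, Function.update_eq_self]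

lemma tensorAt_add_smul_single (i : ι) (u v : ℝ → ℝ) (x : EuclideanSpace ℝ ι) (t : ℝ) :
    tensorAt i u v (x + t • EuclideanSpace.single i 1) =
      u (x i + t) * ∏ j with j ≠ i, v (x j) := by
  simp only [tensorAt, PiLp.add_apply, PiLp.smul_apply, PiLp.single_apply, smul_eq_mul,
    if_true, mul_one]
  congr 1
  exact Finset.prod_congr rfl fun j hj => by simp [(Finset.mem_filter.1 hj).2]

lemma differentiableAt_tensorAt {i : ι} {u v : ℝ → ℝ} {x : EuclideanSpace ℝ ι}
    (hu : DifferentiableAt ℝ u (x i)) (hv : ∀ j ≠ i, DifferentiableAt ℝ v (x j)) :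
    DifferentiableAt ℝ (tensorAt i u v) x := by
  have hcoord (j : ι) : DifferentiableAt ℝ (fun y : EuclideanSpace ℝ ι => y j) x := by fun_prop
  have hrest : DifferentiableAt ℝ (fun y : EuclideanSpace ℝ ι => ∏ j with j ≠ i, v (y j)) x :=
    (HasFDerivAt.finsetProd fun j hj =>
      ((hv j (Finset.mem_filter.1 hj).2).comp x (hcoord j)).hasFDerivAt).differentiableAt
  exact (hu.comp x (hcoord i)).mul hrest

lemma fderiv_tensorAt_single {i : ι} {u v : ℝ → ℝ} {x : EuclideanSpace ℝ ι}
    (hu : DifferentiableAt ℝ u (x i)) (hv : ∀ j ≠ i, DifferentiableAt ℝ v (x j)) :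
    fderiv ℝ (tensorAt i u v) x (EuclideanSpace.single i 1) = tensorAt i (deriv u) v x := by
  rw [← (differentiableAt_tensorAt hu hv).lineDeriv_eq_fderiv, lineDeriv]
  simp_rw [tensorAt_add_smul_single]
  rw [deriv_mul_const_field, deriv_comp_const_add, add_zero, tensorAt]

lemma tensorAt_eq_pi_prod_comp_ofLp (i : ι) (u v : ℝ → ℝ) :
    tensorAt i u v =
      (fun y : ι → ℝ => ∏ j, Function.update (fun _ => v) i u j (y j)) ∘ WithLp.ofLp :=
  funext (tensorAt_eq_prod_update i u v)

lemma aestronglyMeasurable_tensorAt (i : ι) {u v : ℝ → ℝ} (hu : AEStronglyMeasurable u)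
    (hv : AEStronglyMeasurable v) : AEStronglyMeasurable (tensorAt i u v) := by
  have hfactors := aestronglyMeasurable_update (i := i) hu fun _ _ => hv
  rw [tensorAt_eq_pi_prod_comp_ofLp]
  exact (aestronglyMeasurable_pi_prod hfactors).comp_measurePreserving
    (PiLp.volume_preserving_ofLp ι)

lemma lpNorm_tensorAt (i : ι) {u v : ℝ → ℝ} (hu : AEStronglyMeasurable u)
    (hv : AEStronglyMeasurable v) {p : ℝ≥0∞} (hp : p ≠ 0) (hp' : p ≠ ⊤) :
    lpNorm (tensorAt i u v) p volume =
      lpNorm u p volume * lpNorm v p volume ^ (Fintype.card ι - 1) := by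
  have hfactors := aestronglyMeasurable_update (i := i) hu fun _ _ => hv
  calc lpNorm (tensorAt i u v) p volume
      = ∏ j, lpNorm (Function.update (fun _ => v) i u j) p volume := by
        rw [tensorAt_eq_pi_prod_comp_ofLp, lpNorm_comp_measurePreserving
          (aestronglyMeasurable_pi_prod hfactors) (PiLp.volume_preserving_ofLp ι),
          lpNorm_pi_prod hfactors hp hp']
    _ = ∏ j, Function.update (fun _ => lpNorm v p volume) i (lpNorm u p volume) j :=
        Finset.prod_congr rfl fun j _ =>
          Function.apply_update (fun _ w => lpNorm w p volume) (fun _ => v) i u j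
    _ = lpNorm u p volume * lpNorm v p volume ^ (Fintype.card ι - 1) := by
        rw [Finset.prod_update_of_mem (Finset.mem_univ i), Finset.prod_const,
          Finset.card_univ_sdiff, Finset.card_singleton]

end TensorAt

section Oscillation

variable {φ : ℝ → ℝ} {p : ℝ≥0∞} {μ : Measure ℝ}

lemma deriv_mul_sin_const_mul {t : ℝ} (hφ : DifferentiableAt ℝ φ t) (ω : ℝ) :
    deriv (fun r => φ r * Real.sin (ω * r)) t =
      deriv φ t * Real.sin (ω * t) + ω * (φ t * Real.cos (ω * t)) := by
  have hsin : HasDerivAt (fun r => Real.sin (ω * r)) (Real.cos (ω * t) * ω) t := by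
    simpa using ((hasDerivAt_id t).const_mul ω).sin
  rw [(hφ.hasDerivAt.fun_mul hsin).deriv]
  ring

lemma le_lpNorm_mul_deriv_mul_sin (hφ : Differentiable ℝ φ)
    (hφφ' : MemLp (fun t => φ t * deriv φ t) p μ) (hp : 1 ≤ p) (ω : ℝ) :
    |ω| * lpNorm (fun t => φ t ^ 2 * Real.cos (ω * t)) p μ -
        lpNorm (fun t => φ t * deriv φ t) p μ ≤
      lpNorm (fun t => φ t * deriv (fun r => φ r * Real.sin (ω * r)) t) p μ := by
  set main : ℝ → ℝ := fun t => φ t ^ 2 * Real.cos (ω * t)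
  set err : ℝ → ℝ := fun t => φ t * deriv φ t * Real.sin (ω * t)
  have herr_norm (t : ℝ) : ‖err t‖ ≤ ‖φ t * deriv φ t‖ :=
    (norm_mul_le _ _).trans (mul_le_of_le_one_right (norm_nonneg _) (Real.abs_sin_le_one _))
  have herr : MemLp err p μ :=
    hφφ'.mono (hφφ'.aestronglyMeasurable.mul (by fun_prop)) (.of_forall herr_norm)
  have hleibniz : (fun t => φ t * deriv (fun r => φ r * Real.sin (ω * r)) t) = ω • main + err := by
    ext t
    simp only [deriv_mul_sin_const_mul (hφ t), main, err, Pi.add_apply, Pi.smul_apply, smul_eq_mul]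
    ring
  calc |ω| * lpNorm main p μ - lpNorm (fun t => φ t * deriv φ t) p μ
      ≤ lpNorm (ω • main) p μ - lpNorm err p μ := by
        rw [lpNorm_const_smul, coe_nnnorm, Real.norm_eq_abs]
        exact sub_le_sub_left (lpNorm_mono_norm hφφ' herr_norm) _
    _ ≤ lpNorm (ω • main + err) p μ := sub_le_iff_le_add.2 (lpNorm_le_add_lpNorm_add herr hp)
    _ = _ := by rw [hleibniz]

end Oscillation

section Profiles

variable {d : ℕ} (hd : 0 < d)

lemma pderivOne_tensorAt {u v : ℝ → ℝ} (hu : Differentiable ℝ u) (hv : Differentiable ℝ v)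
    (x : EuclideanSpace ℝ (Fin d)) :
    pderivOne d hd (tensorAt ⟨0, hd⟩ u v) x = tensorAt ⟨0, hd⟩ (deriv u) v x :=
  fderiv_tensorAt_single (hu _) fun _ _ => hv _

lemma fprof_eq_tensorAt (φ : ℝ → ℝ) (s : ℝ) (n : ℕ) :
    fprof d hd φ s n = tensorAt ⟨0, hd⟩
      (fun t => (2 : ℝ) ^ (-(n : ℝ) * s) * (φ t * Real.sin (17 / 12 * 2 ^ n * t))) φ := by
  ext x
  rw [fprof, tensorAt, mul_assoc ((2 : ℝ) ^ _)]

lemma gprof_eq_tensorAt (φ : ℝ → ℝ) (n : ℕ) (x : EuclideanSpace ℝ (Fin d)) :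
    gprof d φ n x = (2 : ℝ) ^ (-(n : ℝ)) * tensorAt ⟨0, hd⟩ φ φ x := by
  rw [gprof, tensorAt_self]

lemma gprof_mul_pderivOne_fprof {φ : ℝ → ℝ} (hφ : Differentiable ℝ φ) (s : ℝ) (n : ℕ) :
    (fun x => gprof d φ n x * pderivOne d hd (fprof d hd φ s n) x) =
      ((2 : ℝ) ^ (-(n : ℝ)) * (2 : ℝ) ^ (-(n : ℝ) * s)) •
        tensorAt ⟨0, hd⟩
          (fun t => φ t * deriv (fun r => φ r * Real.sin (17 / 12 * 2 ^ n * r)) t)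
          (fun t => φ t ^ 2) := by
  have hderiv : deriv (fun t => (2 : ℝ) ^ (-(n : ℝ) * s) * (φ t * Real.sin (17 / 12 * 2 ^ n * t))) =
      fun t => (2 : ℝ) ^ (-(n : ℝ) * s) *
        deriv (fun r => φ r * Real.sin (17 / 12 * 2 ^ n * r)) t :=
    funext fun t => deriv_const_mul_field _
  ext x
  rw [fprof_eq_tensorAt, gprof_eq_tensorAt hd, pderivOne_tensorAt hd (by fun_prop) hφ, hderiv,
    tensorAt_const_mul_left, mul_mul_mul_comm, tensorAt_mul_tensorAt, Pi.smul_apply, smul_eq_mul]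
  simp only [sq]

lemma toReal_eLpNorm_gprof_mul_pderivOne_fprof {φ : ℝ → ℝ} (hφ : Differentiable ℝ φ) {p : ℝ≥0∞}
    (hp : p ≠ 0) (hp' : p ≠ ⊤) (s : ℝ) (n : ℕ) :
    (eLpNorm (fun x => gprof d φ n x * pderivOne d hd (fprof d hd φ s n) x) p volume).toReal =
      (2 : ℝ) ^ (-(n : ℝ)) * (2 : ℝ) ^ (-(n : ℝ) * s) *
        (lpNorm (fun t => φ t * deriv (fun r => φ r * Real.sin (17 / 12 * 2 ^ n * r)) t) p volume *
          lpNorm φ (2 * p) volume ^ (2 * (d - 1))) := by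
  have hφ_meas : AEStronglyMeasurable φ := hφ.continuous.aestronglyMeasurable
  have hfirst : AEStronglyMeasurable
      (fun t => φ t * deriv (fun r => φ r * Real.sin (17 / 12 * 2 ^ n * r)) t) :=
    hφ_meas.mul (aestronglyMeasurable_deriv _ _)
  have hrest : lpNorm (fun t => φ t ^ 2) p volume = lpNorm φ (2 * p) volume ^ 2 := by
    exact_mod_cast lpNorm_pow hφ_meas p two_ne_zero
  rw [gprof_mul_pderivOne_fprof hd hφ, toReal_eLpNorm
    ((aestronglyMeasurable_tensorAt _ hfirst (hφ_meas.fun_pow 2)).const_smul _),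
    lpNorm_const_smul, lpNorm_tensorAt _ hfirst (hφ_meas.fun_pow 2) hp hp', hrest, ← pow_mul,
    Fintype.card_fin, coe_nnnorm, Real.norm_of_nonneg (by positivity)]

end Profiles

theorem gprof_mul_pderiv_fprof_lower_bound_general {d : ℕ} (hd : 1 ≤ d) {φ : ℝ → ℝ}
    (hφ : Differentiable ℝ φ) {p : ℝ≥0∞} (hp : 1 ≤ p) (hp' : p ≠ ⊤) (hφp : MemLp φ (2 * p))
    (hφφ' : MemLp (fun t => φ t * deriv φ t) p) (s : ℝ) (n : ℕ) :
    (2 : ℝ) ^ ((n : ℝ) * s) *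
        (eLpNorm (fun x => gprof d φ n x * pderivOne d hd (fprof d hd φ s n) x) p volume).toReal
      ≥ 17 / 12 *
          (eLpNorm (fun x => φ x ^ 2 * Real.cos (17 / 12 * 2 ^ n * x)) p volume).toReal *
          (eLpNorm φ (2 * p) volume).toReal ^ (2 * (d - 1))
        - (2 : ℝ) ^ (-(n : ℝ)) * (eLpNorm (fun x => φ x * deriv φ x) p volume).toReal *
            (eLpNorm φ (2 * p) volume).toReal ^ (2 * (d - 1)) := by
  set ω : ℝ := 17 / 12 * 2 ^ n with hω
  set u : ℝ → ℝ := fun t => φ t * deriv (fun r => φ r * Real.sin (ω * r)) t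
  set A := lpNorm (fun t => φ t ^ 2 * Real.cos (ω * t)) p volume
  set B := lpNorm (fun t => φ t * deriv φ t) p volume
  set N := lpNorm φ (2 * p) volume ^ (2 * (d - 1))
  have hN : 0 ≤ N := pow_nonneg lpNorm_nonneg _
  have hfreq : (2 : ℝ) ^ (-(n : ℝ)) * |ω| = 17 / 12 := by
    rw [abs_of_pos (by positivity), hω, Real.rpow_neg zero_le_two, Real.rpow_natCast]
    field_simp
  have hscale : (2 : ℝ) ^ ((n : ℝ) * s) * (2 : ℝ) ^ (-(n : ℝ) * s) = 1 := by
    rw [neg_mul, ← Real.rpow_add zero_lt_two, add_neg_cancel, Real.rpow_zero]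
  rw [ge_iff_le, toReal_eLpNorm_gprof_mul_pderivOne_fprof hd hφ (zero_lt_one.trans_le hp).ne' hp',
    toReal_eLpNorm ((hφp.1.fun_pow 2).fun_mul (by fun_prop)), toReal_eLpNorm hφp.1,
    toReal_eLpNorm hφφ'.1]
  calc 17 / 12 * A * N - (2 : ℝ) ^ (-(n : ℝ)) * B * N
      = (2 : ℝ) ^ (-(n : ℝ)) * ((|ω| * A - B) * N) := by linear_combination -A * N * hfreq
    _ ≤ (2 : ℝ) ^ (-(n : ℝ)) * (lpNorm u p volume * N) := by
        gcongr
        exact le_lpNorm_mul_deriv_mul_sin hφ hφφ' hp ω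
    _ = (2 : ℝ) ^ ((n : ℝ) * s) *
          ((2 : ℝ) ^ (-(n : ℝ)) * (2 : ℝ) ^ (-(n : ℝ) * s) * (lpNorm u p volume * N)) := by
        linear_combination -(2 : ℝ) ^ (-(n : ℝ)) * lpNorm u p volume * N * hscale

/-- Lower bound for `2^{ns} ‖g_n ∂₁ f_n‖_{L^p(ℝ^d)}`. -/
theorem gprof_mul_pderiv_fprof_lower_bound (d : ℕ) (hd : 1 ≤ d) (φ : SchwartzMap ℝ ℝ)
    (hφ1 : ∀ ξ : ℝ, |ξ| ≤ (4 : ℝ) ^ (-(d : ℤ)) → fourierTransform1 (fun x => φ x) ξ = 1)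
    (hφ0 : ∀ ξ : ℝ, (2 : ℝ) ^ (-(d : ℤ)) ≤ |ξ| → fourierTransform1 (fun x => φ x) ξ = 0)
    (p : ℝ≥0∞) (hp : 1 ≤ p) (hp' : p ≠ ⊤) (s : ℝ) (n : ℕ) :
    (2 : ℝ) ^ ((n : ℝ) * s) *
        (eLpNorm (fun x : EuclideanSpace ℝ (Fin d) =>
          gprof d (fun y => φ y) n x * pderivOne d hd (fprof d hd (fun y => φ y) s n) x)
            p volume).toReal
      ≥ 17 / 12 *
          (eLpNorm (fun x : ℝ => (φ x) ^ 2 * Real.cos (17 / 12 * 2 ^ n * x)) p volume).toReal *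
          ((eLpNorm (fun x : ℝ => φ x) (2 * p) volume).toReal) ^ (2 * (d - 1))
        - (2 : ℝ) ^ (-(n : ℝ)) *
            (eLpNorm (fun x : ℝ => φ x * deriv (fun y => φ y) x) p volume).toReal *
            ((eLpNorm (fun x : ℝ => φ x) (2 * p) volume).toReal) ^ (2 * (d - 1)) :=
  gprof_mul_pderiv_fprof_lower_bound_general hd φ.differentiable hp hp' (φ.memLp (2 * p))
    (((SchwartzMap.derivCLM ℝ ℝ φ).memLp ⊤).mul' (φ.memLp p)) s n
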